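/- Define E₂ = ⋃ L(ρ̂₁, ρ̂₂) ∩ Q̂ over all pairs of distinct positive roots ρ₁, ρ₂ ∈ Φ⁺, and E₂° = ⋃ L(α, ρ̂) ∩ Q̂ over all α ∈ Δ and ρ ∈ Φ⁺ with ρ̂ ≠ α. Then E₂ is the W-orbit of E₂° under the normalized action: E₂ = {w·x : w ∈ W, x ∈ E₂°} (every point x of E₂° lies in E(Φ), so w(x) ∉ V₀ and w·x is defined). -/

import Mathlib

open Filter Topology

noncomputable section

variable {ι V : Type*} [Fintype ι] [NormedAddCommGroup V] [NormedSpace ℝ V]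

/-- The set of simple `B`-reflections: the linear automorphisms of `V` given by the
`B`-reflection formula `u ↦ u - 2 (B α u / B α α) • α` associated to a simple root `α ∈ Δ`. -/
def simpleReflections (B : LinearMap.BilinForm ℝ V) (Δ : Module.Basis ι ℝ V) :
    Set (V ≃ₗ[ℝ] V) :=
  { e | ∃ i : ι, ∀ u : V, e u = u - (2 * B (Δ i) u / B (Δ i) (Δ i)) • Δ i }

/-- The geometric Coxeter group `W`: the subgroup of linear automorphisms of `V`
generated by the simple `B`-reflections. -/
def cox (B : LinearMap.BilinForm ℝ V) (Δ : Module.Basis ι ℝ V) : Subgroup (V ≃ₗ[ℝ] V) :=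
  Subgroup.closure (simpleReflections B Δ)

/-- The root system `Φ = W ⬝ Δ`. -/
def Phi (B : LinearMap.BilinForm ℝ V) (Δ : Module.Basis ι ℝ V) : Set V :=
  { ρ | ∃ w ∈ cox B Δ, ∃ i : ι, w (Δ i) = ρ }

/-- The positive roots `Φ⁺ = Φ ∩ cone(Δ)`. -/
def posPhi (B : LinearMap.BilinForm ℝ V) (Δ : Module.Basis ι ℝ V) : Set V :=
  { ρ ∈ Phi B Δ | ∀ i : ι, 0 ≤ Δ.repr ρ i }

/-- `|v|₁`: the sum of the coordinates of `v` in the basis `Δ`. -/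
def l1 (Δ : Module.Basis ι ℝ V) (v : V) : ℝ := ∑ i : ι, Δ.repr v i

/-- The normalization map `v ↦ v̂ = v / |v|₁`. -/
def nrm (Δ : Module.Basis ι ℝ V) (v : V) : V := (l1 Δ v)⁻¹ • v

/-- The set `Φ̂` of normalized roots. -/
def nPhi (B : LinearMap.BilinForm ℝ V) (Δ : Module.Basis ι ℝ V) : Set V :=
  nrm Δ '' posPhi B Δ

/-- `E(Φ)`: the set of accumulation points of the set of normalized roots. -/
def Eset (B : LinearMap.BilinForm ℝ V) (Δ : Module.Basis ι ℝ V) : Set V :=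
  { x | AccPt x (𝓟 (nPhi B Δ)) }

/-- The isotropic cone `Q` of `B`. -/
def isoQ (B : LinearMap.BilinForm ℝ V) : Set V := { v | B v v = 0 }

/-- The affine line through two points `a` and `b`. -/
def lineThrough (a b : V) : Set V := { y : V | ∃ t : ℝ, y = a + t • (b - a) }

/-- `E₂`: the union over all pairs of distinct positive roots `ρ₁, ρ₂` of
`L(ρ̂₁, ρ̂₂) ∩ Q̂`. -/
def E2 (B : LinearMap.BilinForm ℝ V) (Δ : Module.Basis ι ℝ V) : Set V :=
  { x : V | ∃ ρ₁ ∈ posPhi B Δ, ∃ ρ₂ ∈ posPhi B Δ, ρ₁ ≠ ρ₂ ∧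
      x ∈ lineThrough (nrm Δ ρ₁) (nrm Δ ρ₂) ∧ B x x = 0 ∧ l1 Δ x = 1 }

/-- `E₂°`: the union over all `α ∈ Δ` and `ρ ∈ Φ⁺` with `ρ̂ ≠ α` of `L(α, ρ̂) ∩ Q̂`. -/
def E2circ (B : LinearMap.BilinForm ℝ V) (Δ : Module.Basis ι ℝ V) : Set V :=
  { x : V | ∃ i : ι, ∃ ρ ∈ posPhi B Δ, nrm Δ ρ ≠ Δ i ∧
      x ∈ lineThrough (Δ i) (nrm Δ ρ) ∧ B x x = 0 ∧ l1 Δ x = 1 }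

namespace S15

variable {B : LinearMap.BilinForm ℝ V} {Δ : Module.Basis ι ℝ V}

/-- simple reflections as linear equivalences -/
def IsRefl (B : LinearMap.BilinForm ℝ V) (Δ : Module.Basis ι ℝ V) (S : ι → (V ≃ₗ[ℝ] V)) : Prop :=
  ∀ i u, S i u = u - (2 * B (Δ i) u) • Δ i

omit [Fintype ι] in
lemma exists_refl (hdiag : ∀ i : ι, B (Δ i) (Δ i) = 1) : ∃ S, IsRefl B Δ S := by
  have h : ∀ i, ((2:ℝ) • B (Δ i)) (Δ i) = 2 := by intro i; simp [hdiag i]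
  refine ⟨fun i => Module.reflection (h i), ?_⟩
  intro i u
  simp [Module.reflection_apply]

/-- positivity -/
def pos (Δ : Module.Basis ι ℝ V) (v : V) : Prop := ∀ k, 0 ≤ Δ.repr v k

omit [Fintype ι] in
lemma pos_comb {u v : V} (hu : pos Δ u) (hv : pos Δ v) {x y : ℝ} (hx : 0 ≤ x) (hy : 0 ≤ y) :
    pos Δ (x • u + y • v) := by
  intro k
  have := hu k
  have := hv k
  simp only [map_add, map_smul, Finsupp.add_apply, Finsupp.smul_apply, smul_eq_mul]
  positivity

omit [Fintype ι] in
lemma pos_basis (i : ι) : pos Δ (Δ i) := by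
  classical
  intro k
  rw [Δ.repr_self, Finsupp.single_apply]
  split_ifs <;> norm_num

/-- product of letters -/
def A (S : ι → (V ≃ₗ[ℝ] V)) (c : ℕ → ι) : ℕ → (V ≃ₗ[ℝ] V)
  | 0 => 1
  | n+1 => S (c n) * A S c n

/-- alternating letters -/
def alt (j i : ι) (n : ℕ) : ι := if Even n then j else i

omit [Fintype ι] in
lemma A_shift (S : ι → (V ≃ₗ[ℝ] V)) (c : ℕ → ι) (n : ℕ) :
    A S c (n+1) = A S (fun k => c (k+1)) n * S (c 0) := by
  induction n with
  | zero => simp [A]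
  | succ n ih => rw [A, ih, A, mul_assoc]

omit [Fintype ι] in
lemma S_sq {S : ι → (V ≃ₗ[ℝ] V)} (hS : IsRefl B Δ S) (hdiag : ∀ i : ι, B (Δ i) (Δ i) = 1) (i : ι) :
    S i * S i = 1 := by
  ext u
  change S i (S i u) = u
  rw [hS i (S i u), hS i u]
  simp only [map_sub, map_smul, hdiag, smul_eq_mul]
  module

/-- word length -/
def len (S : ι → (V ≃ₗ[ℝ] V)) (w : V ≃ₗ[ℝ] V) : ℕ :=
  sInf {n | ∃ l : List ι, l.length = n ∧ w = (l.map S).prod}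

/-- being a word -/
def isW (S : ι → (V ≃ₗ[ℝ] V)) (w : V ≃ₗ[ℝ] V) : Prop := ∃ l : List ι, w = (l.map S).prod

omit [Fintype ι] in
lemma len_spec {S : ι → (V ≃ₗ[ℝ] V)} {w : V ≃ₗ[ℝ] V} (h : isW S w) :
    ∃ l : List ι, l.length = len S w ∧ w = (l.map S).prod := by
  obtain ⟨l, hl⟩ := h
  exact Nat.sInf_mem (s := {n | ∃ l : List ι, l.length = n ∧ w = (l.map S).prod}) ⟨l.length, l, rfl, hl⟩

omit [Fintype ι] in
lemma len_le {S : ι → (V ≃ₗ[ℝ] V)} (l : List ι) : len S (l.map S).prod ≤ l.length :=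
  Nat.sInf_le ⟨l, rfl, rfl⟩

omit [Fintype ι] in
lemma len_mul {S : ι → (V ≃ₗ[ℝ] V)} {w : V ≃ₗ[ℝ] V} (h : isW S w) (i : ι) :
    isW S (w * S i) ∧ len S (w * S i) ≤ len S w + 1 := by
  obtain ⟨l, hl, rfl⟩ := len_spec h
  have e : (l.map S).prod * S i = ((l ++ [i]).map S).prod := by simp
  refine ⟨⟨_, e⟩, ?_⟩
  rw [← hl]
  calc len S ((l.map S).prod * S i) = len S ((l ++ [i]).map S).prod := by rw [e]
    _ ≤ (l ++ [i]).length := len_le _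
    _ = _ := by simp

omit [Fintype ι] in
lemma len_mulA {S : ι → (V ≃ₗ[ℝ] V)} (n : ℕ) : ∀ {w : V ≃ₗ[ℝ] V} (_ : isW S w) (c : ℕ → ι),
    len S (w * A S c n) ≤ len S w + n := by
  induction n with
  | zero => intro w h c; simp [A]
  | succ n ih =>
    intro w h c
    have h1 := len_mul h (c n)
    have := ih h1.1 c
    rw [A, ← mul_assoc]
    omega

omit [Fintype ι] in
lemma exists_desc {S : ι → (V ≃ₗ[ℝ] V)} (hsq : ∀ i, S i * S i = 1) {w : V ≃ₗ[ℝ] V} (h : isW S w)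
    (h0 : w ≠ 1) : ∃ j, len S (w * S j) < len S w := by
  obtain ⟨l, hl, hw⟩ := len_spec h
  rcases List.eq_nil_or_concat l with rfl | ⟨l', j, rfl⟩
  · simp at hw; exact absurd hw h0
  · refine ⟨j, ?_⟩
    have e : w * S j = (l'.map S).prod := by
      rw [hw]; simp [mul_assoc, hsq]
    have := len_le (S := S) l'
    rw [e]
    simp at hl
    omega

omit [Fintype ι] in
/-- rank 2, hyperbolic or affine case -/
lemma rank2_hyp {S : ι → (V ≃ₗ[ℝ] V)} (hS : IsRefl B Δ S) (hsymm : ∀ u v : V, B u v = B v u)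
    (hdiag : ∀ i : ι, B (Δ i) (Δ i) = 1) {i j : ι} (hb : B (Δ i) (Δ j) ≤ -1) (n : ℕ) :
    ∃ x y : ℝ, 0 ≤ x ∧ 0 ≤ y ∧ (Even n → y ≤ x) ∧ (¬ Even n → x ≤ y) ∧
      A S (alt j i) n (Δ i) = x • Δ i + y • Δ j := by
  induction n with
  | zero => exact ⟨1, 0, by norm_num, by norm_num, by norm_num, by simp, by simp [A]⟩
  | succ n ih =>
    obtain ⟨x, y, hx, hy, h1, h2, h⟩ := ih
    by_cases hn : Even n
    · refine ⟨x, -y - 2 * B (Δ i) (Δ j) * x, hx, ?_, ?_, ?_, ?_⟩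
      · nlinarith [h1 hn]
      · intro h; exact absurd hn (by simpa [Nat.even_add_one] using h)
      · intro _; nlinarith [h1 hn]
      · rw [A, LinearEquiv.mul_apply, h, hS]
        simp only [alt, if_pos hn, map_add, map_smul, hdiag, hsymm (Δ j) (Δ i), smul_eq_mul]
        module
    · refine ⟨-x - 2 * B (Δ i) (Δ j) * y, y, ?_, hy, ?_, ?_, ?_⟩
      · nlinarith [h2 hn]
      · intro _; nlinarith [h2 hn]
      · intro h; exact absurd h (by simpa [Nat.even_add_one] using hn)
      · rw [A, LinearEquiv.mul_apply, h, hS]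
        simp only [alt, if_neg hn, map_add, map_smul, hdiag, smul_eq_mul]
        module

/-- root at angle p -/
def ee (Δ : Module.Basis ι ℝ V) (i j : ι) (t p : ℝ) : V :=
  (Real.sin (t + p) / Real.sin t) • Δ i + (Real.sin p / Real.sin t) • Δ j

omit [Fintype ι] in
lemma ee_i {S : ι → (V ≃ₗ[ℝ] V)} (hS : IsRefl B Δ S)
    (hdiag : ∀ i : ι, B (Δ i) (Δ i) = 1) {i j : ι} {t : ℝ} (ht : Real.sin t ≠ 0)
    (hb : B (Δ i) (Δ j) = - Real.cos t) (p : ℝ) :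
    S i (ee Δ i j t p) = ee Δ i j t (Real.pi - p) := by
  rw [hS]
  simp only [ee, map_add, map_smul, hdiag, hb, smul_eq_mul]
  have h1 : Real.sin (t + (Real.pi - p)) = - Real.sin (t - p) := by
    rw [show t + (Real.pi - p) = (t - p) + Real.pi by ring, Real.sin_add_pi]
  rw [h1, Real.sin_pi_sub, Real.sin_sub, Real.sin_add]
  match_scalars <;> field_simp <;> ring

omit [Fintype ι] in
lemma ee_j {S : ι → (V ≃ₗ[ℝ] V)} (hS : IsRefl B Δ S) (hsymm : ∀ u v : V, B u v = B v u)
    (hdiag : ∀ i : ι, B (Δ i) (Δ i) = 1) {i j : ι} {t : ℝ} (ht : Real.sin t ≠ 0)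
    (hb : B (Δ i) (Δ j) = - Real.cos t) (p : ℝ) :
    S j (ee Δ i j t p) = ee Δ i j t (Real.pi - 2 * t - p) := by
  rw [hS]
  simp only [ee, map_add, map_smul, hdiag, hsymm (Δ j) (Δ i), hb, smul_eq_mul]
  have h1 : Real.sin (t + (Real.pi - 2 * t - p)) = Real.sin (t + p) := by
    rw [show t + (Real.pi - 2 * t - p) = Real.pi - (t + p) by ring, Real.sin_pi_sub]
  have h2 : Real.sin (Real.pi - 2 * t - p) = Real.sin (t + (t + p)) := by
    rw [show Real.pi - 2 * t - p = Real.pi - (t + (t + p)) by ring, Real.sin_pi_sub]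
  rw [h1, h2, Real.sin_add t (t + p), Real.sin_add t p, Real.cos_add t p]
  match_scalars
  · field_simp
  · field_simp
    have := Real.sin_sq_add_cos_sq t
    have h3 : Real.sin t ^ 2 = 1 - Real.cos t ^ 2 := by linarith
    ring_nf
    rw [h3]
    ring

omit [Fintype ι] in
lemma ee_A {S : ι → (V ≃ₗ[ℝ] V)} (hS : IsRefl B Δ S) (hsymm : ∀ u v : V, B u v = B v u)
    (hdiag : ∀ i : ι, B (Δ i) (Δ i) = 1) {i j : ι} {t : ℝ} (ht : Real.sin t ≠ 0)
    (hb : B (Δ i) (Δ j) = - Real.cos t) (p : ℝ) (n : ℕ) :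
    A S (alt j i) n (ee Δ i j t p) =
      ee Δ i j t (if Even n then p + n * t else Real.pi - (n + 1) * t - p) := by
  induction n with
  | zero => simp [A]
  | succ n ih =>
    rw [A, LinearEquiv.mul_apply, ih]
    by_cases hn : Even n
    · have hn' : ¬ Even (n+1) := by simpa [Nat.even_add_one] using hn
      simp only [alt, if_pos hn, if_neg hn']
      rw [ee_j hS hsymm hdiag ht hb]
      congr 1; push_cast; ring
    · have hn' : Even (n+1) := by simpa [Nat.even_add_one] using hn
      simp only [alt, if_neg hn, if_pos hn']
      rw [ee_i hS hdiag ht hb]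
      congr 1; push_cast; ring

omit [Fintype ι] in
lemma ee_A' {S : ι → (V ≃ₗ[ℝ] V)} (hS : IsRefl B Δ S) (hsymm : ∀ u v : V, B u v = B v u)
    (hdiag : ∀ i : ι, B (Δ i) (Δ i) = 1) {i j : ι} {t : ℝ} (ht : Real.sin t ≠ 0)
    (hb : B (Δ i) (Δ j) = - Real.cos t) (p : ℝ) (n : ℕ) :
    A S (alt i j) n (ee Δ i j t p) =
      ee Δ i j t (if Even n then p - n * t else Real.pi - p + (n - 1) * t) := by
  induction n with
  | zero => simp [A]
  | succ n ih =>
    rw [A, LinearEquiv.mul_apply, ih]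
    by_cases hn : Even n
    · have hn' : ¬ Even (n+1) := by simpa [Nat.even_add_one] using hn
      simp only [alt, if_pos hn, if_neg hn']
      rw [ee_i hS hdiag ht hb]
      congr 1; push_cast; ring
    · have hn' : Even (n+1) := by simpa [Nat.even_add_one] using hn
      simp only [alt, if_neg hn, if_pos hn']
      rw [ee_j hS hsymm hdiag ht hb]
      congr 1; push_cast; ring

omit [Fintype ι] in
lemma ee_per {i j : ι} {t : ℝ} (p : ℝ) : ee Δ i j t (p + 2 * Real.pi) = ee Δ i j t p := by
  simp only [ee, ← add_assoc, Real.sin_add_two_pi]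

omit [Fintype ι] in
lemma ee_zero {i j : ι} {t : ℝ} (ht : Real.sin t ≠ 0) : ee Δ i j t 0 = Δ i := by
  simp [ee, ht]

omit [Fintype ι] in
lemma ee_last {i j : ι} {t : ℝ} (ht : Real.sin t ≠ 0) : ee Δ i j t (Real.pi - t) = Δ j := by
  simp [ee, ht]

omit [Fintype ι] in
lemma A_fix {S : ι → (V ≃ₗ[ℝ] V)} (hS : IsRefl B Δ S) {i j : ι} {z : V} (hi : B (Δ i) z = 0)
    (hj : B (Δ j) z = 0) (n : ℕ) : A S (alt j i) n z = z := by
  induction n with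
  | zero => simp [A]
  | succ n ih =>
    rw [A, LinearEquiv.mul_apply, ih, hS, alt]
    split_ifs <;> simp [hi, hj]

omit [Fintype ι] in
lemma braid {S : ι → (V ≃ₗ[ℝ] V)} (hS : IsRefl B Δ S) (hsymm : ∀ u v : V, B u v = B v u)
    (hdiag : ∀ i : ι, B (Δ i) (Δ i) = 1) {i j : ι} {t : ℝ} (ht : Real.sin t ≠ 0)
    (hb : B (Δ i) (Δ j) = - Real.cos t) {m : ℕ} (hm : m * t = Real.pi) :
    A S (alt j i) m = A S (alt i j) m := by
  have key : ∀ p, A S (alt j i) m (ee Δ i j t p) = A S (alt i j) m (ee Δ i j t p) := by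
    intro p
    rw [ee_A hS hsymm hdiag ht hb, ee_A' hS hsymm hdiag ht hb]
    split_ifs
    · rw [← ee_per (p - m * t)]; congr 1; rw [hm]; ring
    · rw [← ee_per (Real.pi - (m+1) * t - p)]; congr 1; linear_combination (-2) * hm
  have ki := key 0
  have kj := key (Real.pi - t)
  rw [ee_zero ht] at ki
  rw [ee_last ht] at kj
  ext v
  set b := B (Δ i) (Δ j) with hbdef
  have hne : 1 - b ^ 2 ≠ 0 := by
    rw [hb]
    have := Real.sin_sq_add_cos_sq t
    intro h
    apply ht
    have : Real.sin t ^ 2 = 0 := by linarith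
    exact pow_eq_zero_iff (two_ne_zero) |>.1 this
  set x := (B (Δ i) v - b * B (Δ j) v) / (1 - b ^ 2) with hx
  set y := (B (Δ j) v - b * B (Δ i) v) / (1 - b ^ 2) with hy
  set z := v - x • Δ i - y • Δ j with hz
  have hv : v = x • Δ i + y • Δ j + z := by rw [hz]; module
  have zi : B (Δ i) z = 0 := by
    simp only [hz, map_sub, map_smul, hdiag, ← hbdef, smul_eq_mul]
    rw [hx, hy]; field_simp; ring
  have zj : B (Δ j) z = 0 := by
    simp only [hz, map_sub, map_smul, hdiag, hsymm (Δ j) (Δ i), ← hbdef, smul_eq_mul]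
    rw [hx, hy]; field_simp; ring
  rw [hv]
  simp only [map_add, map_smul, ki, kj, A_fix hS zi zj, A_fix hS zj zi]

omit [Fintype ι] in
lemma rank2_ell {S : ι → (V ≃ₗ[ℝ] V)} (hS : IsRefl B Δ S) (hsymm : ∀ u v : V, B u v = B v u)
    (hdiag : ∀ i : ι, B (Δ i) (Δ i) = 1) {i j : ι} {t : ℝ} (ht : 0 < Real.sin t) (ht0 : 0 < t)
    (hb : B (Δ i) (Δ j) = - Real.cos t) {m : ℕ} (hm : m * t = Real.pi) {n : ℕ} (hn : n < m) :
    ∃ x y : ℝ, 0 ≤ x ∧ 0 ≤ y ∧ A S (alt j i) n (Δ i) = x • Δ i + y • Δ j := by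
  have h1 : ((n:ℝ) + 1) * t ≤ Real.pi := by
    rw [← hm]; gcongr; exact_mod_cast hn
  have h2 : 0 ≤ (n:ℝ) * t := by positivity
  have h := ee_A hS hsymm hdiag ht.ne' hb 0 n
  rw [ee_zero ht.ne'] at h
  refine ⟨_, _, ?_, ?_, h⟩
  · apply div_nonneg _ ht.le
    apply Real.sin_nonneg_of_nonneg_of_le_pi <;> split_ifs <;> linarith
  · apply div_nonneg _ ht.le
    apply Real.sin_nonneg_of_nonneg_of_le_pi <;> split_ifs <;> linarith

omit [Fintype ι] in
theorem pos_of_len {S : ι → (V ≃ₗ[ℝ] V)} (hS : IsRefl B Δ S) (hsymm : ∀ u v : V, B u v = B v u)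
    (hdiag : ∀ i : ι, B (Δ i) (Δ i) = 1)
    (hoff : ∀ i j : ι, i ≠ j → B (Δ i) (Δ j) ≤ -1 ∨
      ∃ k : ℕ, 2 ≤ k ∧ B (Δ i) (Δ j) = -Real.cos (Real.pi / (k : ℝ))) (N : ℕ) :
    ∀ w, isW S w → len S w = N → ∀ i, len S w ≤ len S (w * S i) → pos Δ (w (Δ i)) := by
  have hsq := S_sq hS hdiag
  induction N using Nat.strong_induction_on with
  | _ N IH =>
  intro w hw hN i hi
  by_cases h1 : w = 1
  · subst h1; simpa using pos_basis i
  obtain ⟨j, hj⟩ := exists_desc hsq hw h1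
  have hij : i ≠ j := by rintro rfl; omega
  -- descending chain
  let v : ℕ → (V ≃ₗ[ℝ] V) := fun n => Nat.rec w (fun n u => u * S (alt j i n)) n
  have v0 : v 0 = w := rfl
  have vs : ∀ n, v (n+1) = v n * S (alt j i n) := fun n => rfl
  have vW : ∀ n, isW S (v n) := by
    intro n
    induction n with
    | zero => exact hw
    | succ n ih => rw [vs]; exact (len_mul ih _).1
  have vA : ∀ n, v n * A S (alt j i) n = w := by
    intro n
    induction n with
    | zero => simp [v0, A]
    | succ n ih => rw [vs, A, mul_assoc, ← mul_assoc (S _) (S _), hsq, one_mul, ih]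
  classical
  have hex : ∃ n, ¬ (len S (v n) + n ≤ len S w) := ⟨len S w + 1, by omega⟩
  obtain ⟨k, hk1, hk2, hkm⟩ : ∃ k, 1 ≤ k ∧ ¬ (len S (v (k+1)) + (k+1) ≤ len S w) ∧
      ∀ n ≤ k, len S (v n) + n ≤ len S w := by
    have hs := Nat.find_spec hex
    have hmin : ∀ n < Nat.find hex, len S (v n) + n ≤ len S w := fun n hn => by
      have := Nat.find_min hex hn; push Not at this; exact this
    have a0 : Nat.find hex ≠ 0 := by
      intro h; rw [h, v0] at hs; omega
    have a1 : Nat.find hex ≠ 1 := by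
      intro h; rw [h, show v 1 = w * S (alt j i 0) from rfl] at hs; simp only [alt, Even.zero, if_true] at hs; omega
    obtain ⟨k, hk⟩ : ∃ k, Nat.find hex = k + 1 := Nat.exists_eq_succ_of_ne_zero a0
    refine ⟨k, by omega, by rw [← hk]; exact hs, fun n hn => hmin n (by omega)⟩
  have hkk := hkm k le_rfl
  have hklt : len S (v k) < N := by omega
  have up1 : len S (v k) ≤ len S (v k * S (alt j i k)) := by
    rw [← vs]; omega
  obtain ⟨k', rfl⟩ : ∃ k', k = k' + 1 := ⟨k - 1, by omega⟩
  have up2 : len S (v (k'+1)) ≤ len S (v (k'+1) * S (alt j i k')) := by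
    have : v (k'+1) * S (alt j i k') = v k' := by rw [vs, mul_assoc, hsq, mul_one]
    rw [this]
    have h3 := len_mulA k' (vW k') (alt j i)
    rw [vA] at h3
    omega
  have p1 := IH _ hklt (v (k'+1)) (vW (k'+1)) rfl _ up1
  have p2 := IH _ hklt (v (k'+1)) (vW (k'+1)) rfl _ up2
  have pp : pos Δ (v (k'+1) (Δ i)) ∧ pos Δ (v (k'+1) (Δ j)) := by
    by_cases he : Even k'
    · have he' : ¬ Even (k'+1) := by simpa [Nat.even_add_one] using he
      simp only [alt, if_pos he, if_neg he'] at p1 p2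
      exact ⟨p1, p2⟩
    · have he' : Even (k'+1) := by simpa [Nat.even_add_one] using he
      simp only [alt, if_neg he, if_pos he'] at p1 p2
      exact ⟨p2, p1⟩
  have main : ∃ x y : ℝ, 0 ≤ x ∧ 0 ≤ y ∧ A S (alt j i) (k'+1) (Δ i) = x • Δ i + y • Δ j := by
    rcases hoff i j hij with hb | ⟨m, hm2, hb⟩
    · obtain ⟨x, y, hx, hy, -, -, h⟩ := rank2_hyp hS hsymm hdiag hb (k'+1)
      exact ⟨x, y, hx, hy, h⟩
    · have hm0 : (2:ℝ) ≤ m := by exact_mod_cast hm2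
      have hmt : (m:ℝ) * (Real.pi / m) = Real.pi := by field_simp
      have ht0 : 0 < Real.pi / (m:ℝ) := by have := Real.pi_pos; positivity
      have htp : Real.pi / (m:ℝ) < Real.pi := by
        apply div_lt_self Real.pi_pos; linarith
      have hs := Real.sin_pos_of_pos_of_lt_pi ht0 htp
      apply rank2_ell hS hsymm hdiag hs ht0 hb hmt
      by_contra hcon
      push Not at hcon
      have h4 := hkm m hcon
      have br := braid hS hsymm hdiag hs.ne' hb hmt
      obtain ⟨m', rfl⟩ : ∃ m', m = m' + 1 := ⟨m - 1, by omega⟩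
      have : w * S i = v (m'+1) * A S (fun k => alt i j (k+1)) m' := by
        have e0 : alt i j 0 = i := by simp [alt]
        have e1 : A S (alt i j) (m'+1) * S i = A S (fun k => alt i j (k+1)) m' := by
          rw [A_shift, e0, mul_assoc, hsq, mul_one]
        rw [← e1, ← br, ← mul_assoc, vA (m'+1)]
      have h5 := len_mulA m' (vW (m'+1)) (fun k => alt i j (k+1))
      rw [← this] at h5
      omega
  obtain ⟨x, y, hx, hy, h⟩ := main
  have : w (Δ i) = x • v (k'+1) (Δ i) + y • v (k'+1) (Δ j) := by
    rw [← vA (k'+1), LinearEquiv.mul_apply, h]; simp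
  rw [this]
  exact pos_comb pp.1 pp.2 hx hy

omit [Fintype ι] in
theorem pos_or_neg {S : ι → (V ≃ₗ[ℝ] V)} (hS : IsRefl B Δ S) (hsymm : ∀ u v : V, B u v = B v u)
    (hdiag : ∀ i : ι, B (Δ i) (Δ i) = 1)
    (hoff : ∀ i j : ι, i ≠ j → B (Δ i) (Δ j) ≤ -1 ∨
      ∃ k : ℕ, 2 ≤ k ∧ B (Δ i) (Δ j) = -Real.cos (Real.pi / (k : ℝ)))
    {w : V ≃ₗ[ℝ] V} (hw : isW S w) (i : ι) : pos Δ (w (Δ i)) ∨ pos Δ (-(w (Δ i))) := by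
  have hsq := S_sq hS hdiag
  by_cases h : len S w ≤ len S (w * S i)
  · exact Or.inl (pos_of_len hS hsymm hdiag hoff _ w hw rfl i h)
  · right
    have h2 := pos_of_len hS hsymm hdiag hoff _ (w * S i) (len_mul hw i).1 rfl i
      (by rw [mul_assoc, hsq, mul_one]; omega)
    have : (w * S i) (Δ i) = -(w (Δ i)) := by
      rw [LinearEquiv.mul_apply, hS, hdiag, ← map_neg]; congr 1; module
    rwa [this] at h2

omit [Fintype ι] in
lemma mem_simple {S : ι → (V ≃ₗ[ℝ] V)} (hS : IsRefl B Δ S) (hdiag : ∀ i : ι, B (Δ i) (Δ i) = 1)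
    (e : V ≃ₗ[ℝ] V) : e ∈ simpleReflections B Δ ↔ ∃ i, e = S i := by
  constructor
  · rintro ⟨i, hi⟩
    refine ⟨i, ?_⟩
    ext u
    rw [hi, hS, hdiag, div_one]
  · rintro ⟨i, rfl⟩
    exact ⟨i, fun u => by rw [hS, hdiag, div_one]⟩

omit [Fintype ι] in
lemma cox_isW {S : ι → (V ≃ₗ[ℝ] V)} (hS : IsRefl B Δ S) (hdiag : ∀ i : ι, B (Δ i) (Δ i) = 1)
    {w : V ≃ₗ[ℝ] V} (hw : w ∈ cox B Δ) : isW S w := by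
  have hsq := S_sq hS hdiag
  induction hw using Subgroup.closure_induction with
  | mem x hx =>
    obtain ⟨i, rfl⟩ := (mem_simple hS hdiag x).1 hx
    exact ⟨[i], by simp⟩
  | one => exact ⟨[], by simp⟩
  | mul x y _ _ hx hy =>
    obtain ⟨l, rfl⟩ := hx
    obtain ⟨l', rfl⟩ := hy
    exact ⟨l ++ l', by simp⟩
  | inv x _ hx =>
    obtain ⟨l, rfl⟩ := hx
    refine ⟨l.reverse, ?_⟩
    rw [List.prod_inv_reverse, List.map_reverse, List.map_map]
    congr 2
    apply List.map_congr_left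
    intro i _
    exact inv_eq_of_mul_eq_one_left (hsq i)

omit [Fintype ι] in
lemma B_inv (hsymm : ∀ u v : V, B u v = B v u) (hdiag : ∀ i : ι, B (Δ i) (Δ i) = 1)
    {w : V ≃ₗ[ℝ] V} (hw : w ∈ cox B Δ) : ∀ u v, B (w u) (w v) = B u v := by
  induction hw using Subgroup.closure_induction with
  | mem x hx =>
    obtain ⟨i, hi⟩ := hx
    intro u v
    rw [hi u, hi v]
    simp only [hdiag, map_sub, map_smul, LinearMap.sub_apply, LinearMap.smul_apply, smul_eq_mul,
      hsymm u (Δ i)]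
    ring
  | one => intro u v; rfl
  | mul x y _ _ hx hy => intro u v; rw [LinearEquiv.mul_apply, LinearEquiv.mul_apply, hx, hy]
  | inv x _ hx =>
    intro u v
    rw [← hx]
    congr 1
    · congr 1; exact LinearEquiv.apply_symm_apply x u
    · exact LinearEquiv.apply_symm_apply x v

omit [Fintype ι] in
lemma Phi_w {w : V ≃ₗ[ℝ] V} (hw : w ∈ cox B Δ) {r : V} (hr : r ∈ Phi B Δ) : w r ∈ Phi B Δ := by
  obtain ⟨u, hu, i, rfl⟩ := hr
  exact ⟨w * u, mul_mem hw hu, i, rfl⟩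

omit [Fintype ι] in
lemma Phi_one (hsymm : ∀ u v : V, B u v = B v u) (hdiag : ∀ i : ι, B (Δ i) (Δ i) = 1)
    {r : V} (hr : r ∈ Phi B Δ) : B r r = 1 := by
  obtain ⟨u, hu, i, rfl⟩ := hr
  rw [B_inv hsymm hdiag hu, hdiag]

omit [Fintype ι] in
lemma Phi_refl (hsymm : ∀ u v : V, B u v = B v u) (hdiag : ∀ i : ι, B (Δ i) (Δ i) = 1)
    {r s : V} (hr : r ∈ Phi B Δ) (hs : s ∈ Phi B Δ) : s - (2 * B r s) • r ∈ Phi B Δ := by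
  obtain ⟨S, hS⟩ := exists_refl hdiag
  obtain ⟨w, hw, i, rfl⟩ := hr
  have hSi : S i ∈ cox B Δ := Subgroup.subset_closure ((mem_simple hS hdiag _).2 ⟨i, rfl⟩)
  have h := Phi_w hw (Phi_w hSi (Phi_w (inv_mem hw) hs))
  have e : w (w⁻¹ s) = s := LinearEquiv.apply_symm_apply w s
  rw [hS, map_sub, map_smul, e] at h
  rwa [← e, B_inv hsymm hdiag hw, e]

omit [Fintype ι] in
lemma Phi_neg (hsymm : ∀ u v : V, B u v = B v u) (hdiag : ∀ i : ι, B (Δ i) (Δ i) = 1)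
    {r : V} (hr : r ∈ Phi B Δ) : -r ∈ Phi B Δ := by
  have := Phi_refl hsymm hdiag hr hr
  rw [Phi_one hsymm hdiag hr] at this
  convert this using 1
  module

lemma l1_add (u v : V) : l1 Δ (u + v) = l1 Δ u + l1 Δ v := by
  simp [l1, Finset.sum_add_distrib]

lemma l1_smul (c : ℝ) (v : V) : l1 Δ (c • v) = c * l1 Δ v := by
  simp [l1, Finset.mul_sum]

lemma l1_basis (i : ι) : l1 Δ (Δ i) = 1 := by
  classical
  simp [l1, Finsupp.single_apply]

lemma nrm_smul {c : ℝ} (hc : c ≠ 0) (v : V) : nrm Δ (c • v) = nrm Δ v := by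
  rw [nrm, nrm, l1_smul, smul_smul, mul_inv]
  congr 1
  field_simp

lemma nrm_of_one {v : V} (h : l1 Δ v = 1) : nrm Δ v = v := by
  simp [nrm, h]

lemma l1_nrm {v : V} (h : l1 Δ v ≠ 0) : l1 Δ (nrm Δ v) = 1 := by
  rw [nrm, l1_smul, inv_mul_cancel₀ h]

lemma l1_ne {v : V} (hv : v ≠ 0) (h : pos Δ v ∨ pos Δ (-v)) : l1 Δ v ≠ 0 := by
  have key : ∀ u : V, pos Δ u → l1 Δ u = 0 → u = 0 := by
    intro u hu h0
    rw [l1, Finset.sum_eq_zero_iff_of_nonneg (fun i _ => hu i)] at h0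
    apply Δ.repr.injective
    ext i
    simpa using h0 i (Finset.mem_univ i)
  intro h0
  rcases h with h | h
  · exact hv (key v h h0)
  · apply hv
    have := key (-v) h (by rw [← neg_one_smul ℝ v, l1_smul, h0, mul_zero])
    simpa using this

lemma line_iff {a b x : V} (ha : l1 Δ a ≠ 0) (hb : l1 Δ b ≠ 0) (hx : l1 Δ x = 1) :
    x ∈ lineThrough (nrm Δ a) (nrm Δ b) ↔ ∃ p q : ℝ, x = p • a + q • b := by
  constructor
  · rintro ⟨t, rfl⟩
    refine ⟨(1 - t) * (l1 Δ a)⁻¹, t * (l1 Δ b)⁻¹, ?_⟩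
    simp only [nrm]
    module
  · rintro ⟨p, q, rfl⟩
    refine ⟨q * l1 Δ b, ?_⟩
    rw [l1_add, l1_smul, l1_smul] at hx
    simp only [nrm]
    have hp : p * l1 Δ a = 1 - q * l1 Δ b := by linarith
    have e : p = (1 - q * l1 Δ b) * (l1 Δ a)⁻¹ := by
      rw [← hp]; field_simp
    match_scalars
    · rw [e]; ring
    · field_simp

omit [Fintype ι] in
lemma seq_aux (hsymm : ∀ u v : V, B u v = B v u) (hdiag : ∀ i : ι, B (Δ i) (Δ i) = 1)
    {r s : V} (hr : r ∈ Phi B Δ) (hs : s ∈ Phi B Δ) {p : ℝ} (hp : 1 ≤ p ^ 2)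
    (h : p ^ 2 + 2 * p * B r s + 1 = 0) :
    ∃ (β : ℕ → V) (c : ℕ → ℝ), (∀ n, β n ∈ Phi B Δ) ∧
      Tendsto (fun n => c n • β n) atTop (𝓝 (p • r + s)) := by
  have hrr := Phi_one hsymm hdiag hr
  have hss := Phi_one hsymm hdiag hs
  have hp0 : p ≠ 0 := by rintro rfl; norm_num at hp
  set b := B r s with hb
  have hsr : B s r = b := hsymm s r
  -- the product of the two reflections
  have step : ∀ x y : ℝ, x • r + y • s ∈ Phi B Δ →
      (x + 2 * b * y - 0 - 2 * x + 4 * b ^ 2 * x) • r + (-y - 2 * b * x) • s ∈ Phi B Δ := by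
    intro x y hxy
    have h1 := Phi_refl hsymm hdiag hs hxy
    have h2 := Phi_refl hsymm hdiag hr h1
    convert h2 using 1
    simp only [map_add, map_sub, map_smul, hrr, hss, hsr, ← hb, smul_eq_mul]
    module
  have hbv : b = -(p ^ 2 + 1) / (2 * p) := by field_simp; linarith
  rcases eq_or_lt_of_le hp with h1 | h1
  · -- degenerate
    have hbp : b = -p := by
      have : 2 * p * (b + p) = 0 := by linarith
      rcases mul_eq_zero.1 this with h | h
      · exact absurd h (by simpa using hp0)
      · linarith
    refine ⟨fun n => (1 + 2 * (n:ℝ)) • r + (2 * n * p) • s, fun n => p * (2 * (n:ℝ))⁻¹, ?_, ?_⟩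
    · intro n
      induction n with
      | zero => simpa using hr
      | succ n ih =>
        have := step _ _ ih
        convert this using 1
        rw [hbp]
        push_cast
        congr 2
        · linear_combination (4 + 4 * (n:ℝ)) * h1
        · ring
    · have hlim : Tendsto (fun n : ℕ => (p * (2 * (n:ℝ))⁻¹) • r + (p • r + s)) atTop
          (𝓝 ((p * (2⁻¹ * 0)) • r + (p • r + s))) := by
        refine Tendsto.add (Tendsto.smul_const ?_ r) tendsto_const_nhds
        simp only [mul_inv]
        exact (tendsto_inv_atTop_nhds_zero_nat.const_mul _).const_mul _
      simp only [mul_zero, zero_smul, zero_add] at hlim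
      refine hlim.congr' ?_
      filter_upwards [eventually_gt_atTop 0] with n hn
      have hn' : (n:ℝ) ≠ 0 := by positivity
      match_scalars
      · field_simp
      · field_simp
        linear_combination h1
  · have hd : p ^ 2 - 1 ≠ 0 := by linarith
    -- β n = (p^{2n+1} x - p^{-2n} x') / (p^2-1)
    refine ⟨fun n => ((p ^ (2*n+2) - (p⁻¹) ^ (2*n)) / (p ^ 2 - 1)) • r
        + ((p ^ (2*n+1) - p * (p⁻¹) ^ (2*n)) / (p ^ 2 - 1)) • s,
      fun n => (p ^ 2 - 1) * (p⁻¹) ^ (2 * n + 1), ?_, ?_⟩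
    · intro n
      induction n with
      | zero =>
        have e1 : (p ^ (2*0+2) - (p⁻¹) ^ (2*0)) / (p ^ 2 - 1) = 1 := by
          simp [hd]
        have e2 : (p ^ (2*0+1) - p * (p⁻¹) ^ (2*0)) / (p ^ 2 - 1) = 0 := by simp
        simp only [e1, e2, one_smul, zero_smul, add_zero, hr]
      | succ n ih =>
        have := step _ _ ih
        convert this using 1
        rw [hbv]
        have e1 : p ^ (2 * (n+1)) = p ^ (2*n) * p ^ 2 := by ring
        have e2 : (p⁻¹) ^ (2 * (n+1)) = (p⁻¹) ^ (2*n) * (p⁻¹) ^ 2 := by ring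
        simp only [pow_add, e1, e2]
        generalize p ^ (2*n) = X
        generalize (p⁻¹) ^ (2*n) = Y
        congr 2
        · field_simp
          ring
        · field_simp
          ring
    · have hq : |p⁻¹| < 1 := by
        rw [abs_inv]
        apply inv_lt_one_of_one_lt₀
        rw [← one_lt_sq_iff_one_lt_abs]; exact h1
      have hlim : Tendsto (fun n : ℕ => p • r + s - ((p⁻¹) ^ (4 * n + 1)) • (r + p • s)) atTop
          (𝓝 (p • r + s - (0:ℝ) • (r + p • s))) := by
        refine Tendsto.sub tendsto_const_nhds (Tendsto.smul_const ?_ _)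
        refine (tendsto_pow_atTop_nhds_zero_of_abs_lt_one hq).comp ?_
        refine tendsto_atTop_mono (fun n => ?_) tendsto_id
        simp only [id]; omega
      simp only [zero_smul, sub_zero] at hlim
      refine hlim.congr ?_
      intro n
      have e : p ^ (2*n) * (p⁻¹) ^ (2*n) = 1 := by
        rw [← mul_pow, mul_inv_cancel₀ hp0, one_pow]
      have e4 : (p⁻¹) ^ (4 * n + 1) = (p⁻¹) ^ (2*n) * (p⁻¹) ^ (2*n) * p⁻¹ := by ring
      simp only [pow_add, e4]
      generalize p ^ (2*n) = X at e ⊢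
      generalize (p⁻¹) ^ (2*n) = Y at e ⊢
      match_scalars
      · field_simp
        linear_combination (-p ^ 2) * e
      · field_simp
        linear_combination (-1) * e

omit [Fintype ι] in
lemma seq_root (hsymm : ∀ u v : V, B u v = B v u) (hdiag : ∀ i : ι, B (Δ i) (Δ i) = 1)
    {r s : V} (hr : r ∈ Phi B Δ) (hs : s ∈ Phi B Δ) {p q : ℝ} {x : V} (hx : x = p • r + q • s)
    (hx0 : x ≠ 0) (h : B x x = 0) :
    ∃ (β : ℕ → V) (c : ℕ → ℝ), (∀ n, β n ∈ Phi B Δ) ∧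
      Tendsto (fun n => c n • β n) atTop (𝓝 x) := by
  have hrr := Phi_one hsymm hdiag hr
  have hss := Phi_one hsymm hdiag hs
  have h' : p ^ 2 + 2 * p * q * B r s + q ^ 2 = 0 := by
    rw [hx] at h
    simp only [map_add, map_smul, LinearMap.add_apply, LinearMap.smul_apply, smul_eq_mul, hrr, hss,
      hsymm s r] at h
    linarith
  have aux : ∀ {r s : V} (_ : r ∈ Phi B Δ) (_ : s ∈ Phi B Δ) {p q : ℝ} (_ : x = p • r + q • s)
      (_ : p ^ 2 + 2 * p * q * B r s + q ^ 2 = 0) (_ : q ^ 2 ≤ p ^ 2),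
      ∃ (β : ℕ → V) (c : ℕ → ℝ), (∀ n, β n ∈ Phi B Δ) ∧
      Tendsto (fun n => c n • β n) atTop (𝓝 x) := by
    intro r s hr hs p q hx h' hqp
    have hq0 : q ≠ 0 := by
      rintro rfl
      have hp : p = 0 := by
        have : p ^ 2 = 0 := by linarith
        exact pow_eq_zero_iff two_ne_zero |>.1 this
      apply hx0; rw [hx, hp]; simp
    have hq2 : 0 < q ^ 2 := by positivity
    obtain ⟨β, c, h1, h2⟩ := seq_aux hsymm hdiag hr hs (p := p / q)
      (by rw [div_pow, one_le_div hq2]; exact hqp)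
      (by field_simp; linarith)
    refine ⟨β, fun n => q * c n, h1, ?_⟩
    have h3 := h2.const_smul q
    have e : q • ((p / q) • r + s) = x := by
      rw [hx, smul_add, smul_smul, mul_div_cancel₀ _ hq0]
    rw [e] at h3
    simpa only [smul_smul] using h3
  rcases le_total (q ^ 2) (p ^ 2) with hle | hle
  · exact aux hr hs hx h' hle
  · exact aux hs hr (p := q) (q := p) (by rw [hx, add_comm]) (by rw [hsymm s r]; linarith) hle

end S15


open S15

/-- Every point of `E₂°` lies in `E(Φ)` (so that the normalized action is defined on
it), and `E₂` is the `W`-orbit of `E₂°` under the normalized action. -/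
theorem statement15 (B : LinearMap.BilinForm ℝ V) (Δ : Module.Basis ι ℝ V)
    (hsymm : ∀ u v : V, B u v = B v u)
    (hdiag : ∀ i : ι, B (Δ i) (Δ i) = 1)
    (hoff : ∀ i j : ι, i ≠ j → B (Δ i) (Δ j) ≤ -1 ∨
      ∃ k : ℕ, 2 ≤ k ∧ B (Δ i) (Δ j) = -Real.cos (Real.pi / (k : ℝ))) :
    E2circ B Δ ⊆ Eset B Δ ∧
    (∀ x ∈ E2circ B Δ, ∀ w ∈ cox B Δ, l1 Δ (w x) ≠ 0) ∧
    E2 B Δ = { y : V | ∃ w ∈ cox B Δ, ∃ x ∈ E2circ B Δ, y = nrm Δ (w x) } := by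
  classical
  obtain ⟨S, hS⟩ := exists_refl hdiag
  have : FiniteDimensional ℝ V := Δ.finiteDimensional_of_finite
  have hpn : ∀ r ∈ Phi B Δ, pos Δ r ∨ pos Δ (-r) := by
    rintro r ⟨w, hw, i, rfl⟩
    exact pos_or_neg hS hsymm hdiag hoff (cox_isW hS hdiag hw) i
  have hΔ : ∀ i, Δ i ∈ Phi B Δ := fun i => ⟨1, one_mem _, i, rfl⟩
  have hΔp : ∀ i, Δ i ∈ posPhi B Δ := fun i => ⟨hΔ i, pos_basis i⟩
  have hr0 : ∀ r ∈ Phi B Δ, r ≠ 0 := by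
    rintro r hr rfl
    have := Phi_one hsymm hdiag hr
    simp at this
  have hl1 : ∀ r ∈ Phi B Δ, l1 Δ r ≠ 0 := fun r hr => l1_ne (hr0 r hr) (hpn r hr)
  -- an isotropic multiple of a root is zero
  have hmul : ∀ r ∈ Phi B Δ, ∀ c : ℝ, B (c • r) (c • r) = 0 → c • r = 0 := by
    intro r hr c h
    simp only [map_smul, LinearMap.smul_apply, smul_eq_mul, Phi_one hsymm hdiag hr] at h
    have : c = 0 := by simpa using h
    rw [this, zero_smul]
  -- absolute value of a root
  have habs : ∀ r ∈ Phi B Δ, ∃ e : ℝ, e * e = 1 ∧ e • r ∈ posPhi B Δ := by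
    intro r hr
    rcases hpn r hr with h | h
    · exact ⟨1, by norm_num, by rw [one_smul]; exact ⟨hr, h⟩⟩
    · refine ⟨-1, by norm_num, ?_⟩
      rw [neg_one_smul]; exact ⟨Phi_neg hsymm hdiag hr, h⟩
  have hclosed : IsClosed {v : V | pos Δ v ∨ pos Δ (-v)} := by
    have h1 : IsClosed {v : V | pos Δ v} := by
      have : {v : V | pos Δ v} = ⋂ k, {v : V | 0 ≤ Δ.coord k v} := by
        ext v; simp [pos]
      rw [this]
      refine isClosed_iInter fun k => isClosed_le continuous_const ?_
      exact LinearMap.continuous_of_finiteDimensional _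
    exact h1.union (h1.preimage continuous_neg)
  have hcone : ∀ (β : ℕ → V) (c : ℕ → ℝ) (x : V), (∀ n, β n ∈ Phi B Δ) →
      Tendsto (fun n => c n • β n) atTop (𝓝 x) → pos Δ x ∨ pos Δ (-x) := by
    intro β c x hβ hx
    refine hclosed.mem_of_tendsto hx (Eventually.of_forall fun n => ?_)
    have hz : pos Δ (0 : V) := fun k => by simp
    have hsm : ∀ (u : V), pos Δ u → ∀ d : ℝ, 0 ≤ d → pos Δ (d • u) := by
      intro u hu d hd
      have := pos_comb hu hz hd (le_refl 0)
      simpa using this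
    change pos Δ (c n • β n) ∨ pos Δ (-(c n • β n))
    rcases hpn _ (hβ n) with h | h <;> rcases le_total 0 (c n) with hc | hc
    · exact Or.inl (hsm _ h _ hc)
    · right; rw [← neg_smul]; exact hsm _ h _ (by linarith)
    · right; rw [← smul_neg]; exact hsm _ h _ hc
    · left; rw [← neg_smul_neg]; exact hsm _ h _ (by linarith)
  have hiso : ∀ r ∈ Phi B Δ, ∀ s ∈ Phi B Δ, ∀ (p q : ℝ) (x : V), x = p • r + q • s → x ≠ 0 →
      B x x = 0 → l1 Δ x ≠ 0 := by
    intro r hr s hs p q x hx hx0 hB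
    obtain ⟨β, c, h1, h2⟩ := seq_root hsymm hdiag hr hs hx hx0 hB
    exact l1_ne hx0 (hcone β c x h1 h2)
  have hne : ∀ x : V, l1 Δ x = 1 → x ≠ 0 := by
    rintro x hx rfl
    simp [l1] at hx
  -- description of the two sets
  have hcirc : ∀ x ∈ E2circ B Δ, ∃ i, ∃ ρ ∈ posPhi B Δ, ∃ p q : ℝ,
      x = p • Δ i + q • ρ := by
    rintro x ⟨i, ρ, hρ, -, hx, -, h1⟩
    refine ⟨i, ρ, hρ, ?_⟩
    rw [← nrm_of_one (l1_basis (Δ := Δ) i)] at hx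
    exact (line_iff (hl1 _ (hΔ i)) (hl1 _ hρ.1) h1).1 hx
  have hwx : ∀ r ∈ Phi B Δ, ∀ s ∈ Phi B Δ, ∀ (p q : ℝ) (x : V), x = p • r + q • s → x ≠ 0 →
      B x x = 0 → ∀ w ∈ cox B Δ, l1 Δ (w x) ≠ 0 := by
    intro r hr s hs p q x hx hx0 hB w hw
    refine hiso (w r) (Phi_w hw hr) (w s) (Phi_w hw hs) p q _ (by rw [hx]; simp) ?_ ?_
    · simpa using hx0
    · rw [B_inv hsymm hdiag hw, hB]
  refine ⟨?_, ?_, ?_⟩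
  · intro x hx
    obtain ⟨i, ρ, hρ, p, q, hpq⟩ := hcirc x hx
    obtain ⟨-, -, -, -, -, hB, h1⟩ := hx
    obtain ⟨β, c, hβ, ht⟩ := seq_root hsymm hdiag (hΔ i) hρ.1 hpq (hne x h1) hB
    have hcl : Continuous (l1 Δ) := by
      have : Continuous fun v => ∑ i, Δ.coord i v :=
        continuous_finsetSum _ fun i _ => LinearMap.continuous_of_finiteDimensional _
      exact this
    have hl : Tendsto (fun n => l1 Δ (c n • β n)) atTop (𝓝 1) := by
      rw [← h1]; exact (hcl.tendsto x).comp ht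
    have hn : Tendsto (fun n => nrm Δ (c n • β n)) atTop (𝓝 x) := by
      have := (hl.inv₀ one_ne_zero).smul ht
      simpa [nrm] using this
    have hev : ∀ᶠ n in atTop, nrm Δ (c n • β n) ≠ x ∧ nrm Δ (c n • β n) ∈ nPhi B Δ := by
      filter_upwards [hl.eventually_ne one_ne_zero] with n hn0
      have hc : c n ≠ 0 := by
        intro h; apply hn0; rw [l1_smul, h, zero_mul]
      rw [nrm_smul hc]
      constructor
      · intro h
        have h2 := hmul _ (hβ n) (l1 Δ (β n))⁻¹ (by
          change B (nrm Δ (β n)) (nrm Δ (β n)) = 0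
          rw [h, hB])
        change nrm Δ (β n) = 0 at h2
        exact hne x h1 (h ▸ h2)
      · obtain ⟨e, he, hp⟩ := habs _ (hβ n)
        refine ⟨_, hp, nrm_smul ?_ _⟩
        rintro rfl; norm_num at he
    change AccPt x (𝓟 (nPhi B Δ))
    rw [accPt_iff_frequently]
    exact hn.frequently hev.frequently
  · intro x hx w hw
    obtain ⟨i, ρ, hρ, p, q, hpq⟩ := hcirc x hx
    obtain ⟨-, -, -, -, -, hB, h1⟩ := hx
    exact hwx _ (hΔ i) _ hρ.1 p q x hpq (hne x h1) hB w hw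
  · ext y
    constructor
    · rintro ⟨r, hr, s, hs, hrs, hy, hB, h1⟩
      obtain ⟨p, q, hpq⟩ := (line_iff (hl1 _ hr.1) (hl1 _ hs.1) h1).1 hy
      obtain ⟨w, hw, i, hwi⟩ := hr.1
      obtain ⟨e, he, hep⟩ := habs _ (Phi_w (inv_mem hw) hs.1)
      have hne' := hwx r hr.1 s hs.1 p q y hpq (hne y h1) hB _ (inv_mem hw)
      have hwy : w (w⁻¹ y) = y := LinearEquiv.apply_symm_apply w y
      have hwr : w⁻¹ r = Δ i := by rw [← hwi]; exact LinearEquiv.symm_apply_apply w (Δ i)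
      have hx1 : l1 Δ (nrm Δ (w⁻¹ y)) = 1 := l1_nrm hne'
      have hxB : B (nrm Δ (w⁻¹ y)) (nrm Δ (w⁻¹ y)) = 0 := by
        simp only [nrm, map_smul, LinearMap.smul_apply, B_inv hsymm hdiag (inv_mem hw), hB, smul_zero]
      have hxe : nrm Δ (w⁻¹ y) = ((l1 Δ (w⁻¹ y))⁻¹ * p) • Δ i
          + ((l1 Δ (w⁻¹ y))⁻¹ * (q * e)) • (e • w⁻¹ s) := by
        have : w⁻¹ y = p • Δ i + q • w⁻¹ s := by rw [hpq, map_add, map_smul, map_smul, hwr]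
        have h2 : w⁻¹ y = p • Δ i + (q * e) • (e • w⁻¹ s) := by
          rw [this, smul_smul, mul_assoc, he, mul_one]
        rw [nrm]
        nth_rewrite 2 [h2]
        rw [smul_add, smul_smul, smul_smul _ (q * e)]
      refine ⟨w, hw, nrm Δ (w⁻¹ y), ⟨i, _, hep, ?_, ?_, hxB, hx1⟩, ?_⟩
      · intro hcon
        have h3 : e • w⁻¹ s = (l1 Δ (e • w⁻¹ s)) • Δ i := by
          rw [← hcon, nrm, smul_smul, mul_inv_cancel₀ (hl1 _ hep.1), one_smul]
        rw [h3, smul_smul, ← add_smul] at hxe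
        have h4 := hmul (Δ i) (hΔ i) _ (by rw [← hxe]; exact hxB)
        exact hne _ hx1 (hxe.trans h4)
      · nth_rewrite 1 [← nrm_of_one (l1_basis (Δ := Δ) i)]
        exact (line_iff (hl1 _ (hΔ i)) (hl1 _ hep.1) hx1).2 ⟨_, _, hxe⟩
      · have : w (nrm Δ (w⁻¹ y)) = (l1 Δ (w⁻¹ y))⁻¹ • y := by
          rw [nrm, map_smul, hwy]
        rw [this, nrm_smul (inv_ne_zero hne'), nrm_of_one h1]
    · rintro ⟨w, hw, x, hx, rfl⟩
      obtain ⟨i, ρ, hρ, p, q, hpq⟩ := hcirc x hx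
      obtain ⟨-, -, -, -, -, hB, h1⟩ := hx
      have hl := hwx _ (hΔ i) _ hρ.1 p q x hpq (hne x h1) hB w hw
      obtain ⟨e, he, hep⟩ := habs _ (Phi_w hw (hΔ i))
      obtain ⟨f, hf, hfp⟩ := habs _ (Phi_w hw hρ.1)
      have hy1 : l1 Δ (nrm Δ (w x)) = 1 := l1_nrm hl
      have hyB : B (nrm Δ (w x)) (nrm Δ (w x)) = 0 := by
        simp only [nrm, map_smul, LinearMap.smul_apply, B_inv hsymm hdiag hw, hB, smul_zero]
      have hye : nrm Δ (w x) = ((l1 Δ (w x))⁻¹ * (p * e)) • (e • w (Δ i))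
          + ((l1 Δ (w x))⁻¹ * (q * f)) • (f • w ρ) := by
        have h2 : w x = (p * e) • (e • w (Δ i)) + (q * f) • (f • w ρ) := by
          rw [smul_smul, mul_assoc, he, smul_smul, mul_assoc, hf, hpq]; simp
        rw [nrm]
        nth_rewrite 2 [h2]
        rw [smul_add, smul_smul _ (p * e), smul_smul _ (q * f)]
      refine ⟨_, hep, _, hfp, ?_, ?_, hyB, hy1⟩
      · intro hcon
        rw [hcon, ← add_smul] at hye
        have h4 := hmul _ hfp.1 _ (by rw [← hye]; exact hyB)
        exact hne _ hy1 (hye.trans h4)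
      · exact (line_iff (hl1 _ hep.1) (hl1 _ hfp.1) hy1).2 ⟨_, _, hye⟩
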